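/- Let R > 0, b > 0, and let g : [0,R] → ℝ be a Lipschitz, strictly decreasing function with g(0) = 2·log b (= U_b(0)). Define ψ : ℝ² → ℝ on the closed ball of radius R by ψ(y) = g(|y|). Assume that for almost every r ∈ (0,R), 2πr·|g'(r)| ≤ ∫_{B_r} e^(ψ) dy (this is the condition ∫_{∂B_r}|∇ψ| ds ≤ ∫_{B_r} e^ψ dy for the radial function ψ). Then ∫_{B_R} e^(ψ) dy ≥ ∫_{B_R} e^(U_b) dy. -/

import Mathlib

/-!
Write `m(r) = ∫₀ʳ s e^{g(s)} ds`, so that `∫_{B_r} e^ψ = 2π m(r)` and the hypothesis reads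
`r |g'(r)| ≤ m(r)` for a.e. `r`.  Since `m' = r e^g`,
`(r² e^g)' = 2 r e^g + r² e^g g' ≥ 2 m' - m m' = (2m - m²/2)'` a.e.; both sides being absolutely
continuous and zero at the origin, `r m' = r² e^g ≥ 2m - m²/2 = m (4 - m) / 2`
(`sq_mul_exp_ge`).

If `m(R) ≥ 4`, there is nothing to prove, because the mass of the bubble on `B_R` is
`2π · 4b²R²/(8 + b²R²) < 8π`.  Otherwise `m < 4` on `[0,R]`, and the differential inequality says
that `q(r) = m / ((4 - m) r²)` is nondecreasing on `(0,R]`.  Monotonicity of `g` gives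
`m(r) ≥ r² e^{g(r)} / 2`, hence `q(r) ≥ e^{g(r)} / 8`, and letting `r → 0` yields `q(R) ≥ b²/8`
(`mass_ge`); this is the claim, as `q` is constantly `b²/8` for the bubble.
-/

open Real MeasureTheory

/-- The standard bubble `U_λ(y) = -2 log(1 + λ²|y|²/8) + 2 log λ`. -/
noncomputable def Ufun (lam : ℝ) (y : EuclideanSpace ℝ (Fin 2)) : ℝ :=
  -2 * Real.log (1 + lam ^ 2 * ‖y‖ ^ 2 / 8) + 2 * Real.log lam

/-- The radial mass function: `2π * radMass G r` is the integral of `e^{G(|y|)}` over `B_r`. -/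
noncomputable def radMass (G : ℝ → ℝ) (r : ℝ) : ℝ := ∫ s in (0 : ℝ)..r, s * Real.exp (G s)

lemma integral_ball_radial (f : ℝ → ℝ) {r : ℝ} (hr : 0 ≤ r) :
    (∫ y in Metric.ball (0 : EuclideanSpace ℝ (Fin 2)) r, f ‖y‖) =
      2 * π * ∫ s in (0 : ℝ)..r, s * f s := by
  have h1 : (∫ y in Metric.ball (0 : EuclideanSpace ℝ (Fin 2)) r, f ‖y‖) =
      ∫ y : EuclideanSpace ℝ (Fin 2), (Set.Iio r).indicator f ‖y‖ := by
    rw [← integral_indicator measurableSet_ball]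
    congr 1
    ext y
    by_cases h : ‖y‖ < r <;> simp [h, Set.indicator]
  have hv : (volume : Measure (EuclideanSpace ℝ (Fin 2))).real (Metric.ball 0 1) = π := by
    simp [Measure.real, Real.pi_nonneg]
  rw [h1, integral_fun_norm_addHaar, hv]
  have h2 : (∫ y in Set.Ioi (0 : ℝ), y ^ (Module.finrank ℝ (EuclideanSpace ℝ (Fin 2)) - 1) •
      (Set.Iio r).indicator f y) = ∫ s in (0 : ℝ)..r, s * f s := by
    rw [intervalIntegral.integral_of_le hr, integral_Ioc_eq_integral_Ioo,
      ← Set.Ioi_inter_Iio, ← setIntegral_indicator measurableSet_Iio]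
    congr 1
    ext y
    simp [Set.indicator_apply]
  rw [h2]
  simp
  ring

lemma hasDerivAt_radMass {G : ℝ → ℝ} (hG : Continuous G) (r : ℝ) :
    HasDerivAt (radMass G) (r * Real.exp (G r)) r := by
  have hc : Continuous fun s => s * Real.exp (G s) := by fun_prop
  exact intervalIntegral.integral_hasDerivAt_right (hc.intervalIntegrable _ _)
    (hc.stronglyMeasurableAtFilter _ _) hc.continuousAt

/-- The integrated form of `(r² e^G)' ≥ (2m - m²/2)'`.  Lipschitz continuity enters only here: it
makes the function absolutely continuous, so that an a.e. derivative bound can be integrated. -/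
lemma sq_mul_exp_ge {G : ℝ → ℝ} (hG : Continuous G) {R : ℝ} {L : NNReal}
    (hL : LipschitzWith L G)
    (hd : ∀ᵐ r, r ∈ Set.Ioo 0 R → -radMass G r ≤ r * deriv G r)
    {r : ℝ} (hr : r ∈ Set.Icc 0 R) :
    radMass G r * (4 - radMass G r) / 2 ≤ r ^ 2 * Real.exp (G r) := by
  have hexp : AbsolutelyContinuousOnInterval (fun s => Real.exp (G s)) 0 r := by
    obtain ⟨c, hc⟩ := (isCompact_uIcc (a := (0 : ℝ)) (b := r)).bddAbove_image hG.continuousOn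
    obtain ⟨d, hdd⟩ := (isCompact_uIcc (a := (0 : ℝ)) (b := r)).bddBelow_image hG.continuousOn
    obtain ⟨K, hK⟩ := (Real.contDiff_exp (n := 1)).contDiffOn.exists_lipschitzOnWith
      (by decide) (convex_Icc d c) isCompact_Icc
    refine (hK.comp (hL.lipschitzOnWith (s := Set.uIcc 0 r)) ?_).absolutelyContinuousOnInterval
    intro s hs
    exact ⟨hdd ⟨s, hs, rfl⟩, hc ⟨s, hs, rfl⟩⟩
  have hm : AbsolutelyContinuousOnInterval (radMass G) 0 r := by
    have hc : Continuous fun s => s * Real.exp (G s) := by fun_prop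
    exact (hc.intervalIntegrable 0 r).absolutelyContinuousOnInterval_intervalIntegral (by simp)
  have hsq : AbsolutelyContinuousOnInterval (fun s : ℝ => s ^ 2) 0 r :=
    ContDiffOn.absolutelyContinuousOnInterval (by fun_prop)
  have hF := ((hsq.fun_mul hexp).fun_sub (hm.const_mul 2)).fun_add
    ((hm.fun_mul hm).const_mul (1 / 2))
  have hint := hF.integral_deriv_eq_sub
  have hnn : 0 ≤ ∫ s in (0 : ℝ)..r, deriv (fun s => s ^ 2 * Real.exp (G s) - 2 * radMass G s +
      1 / 2 * (radMass G s * radMass G s)) s := by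
    apply intervalIntegral.integral_nonneg_of_ae_restrict hr.1
    rw [← restrict_Ioo_eq_restrict_Icc]
    rw [Filter.EventuallyLE, ae_restrict_iff' measurableSet_Ioo]
    filter_upwards [hd, hL.ae_differentiableAt] with s hs hdiff hmem
    have h1 := hs ⟨hmem.1, hmem.2.trans_le hr.2⟩
    have hm' := hasDerivAt_radMass hG s
    have hder := ((((hasDerivAt_pow 2 s).fun_mul hdiff.hasDerivAt.exp).fun_sub
      (hm'.const_mul 2)).fun_add ((hm'.fun_mul hm').const_mul (1 / 2))).deriv
    rw [hder]
    have : 0 ≤ s * Real.exp (G s) * (s * deriv G s + radMass G s) :=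
      mul_nonneg (mul_nonneg hmem.1.le (Real.exp_pos _).le) (by linarith)
    simp only [Pi.zero_apply]
    push_cast
    linarith
  rw [hint] at hnn
  have h0 : radMass G 0 = 0 := by simp [radMass]
  simp only [h0] at hnn
  linarith

/-- The comparison of masses; `4 b² R² / (8 + b² R²)` is the radial mass of the bubble. -/
lemma mass_ge {G : ℝ → ℝ} {R b : ℝ} (hR : 0 < R) {L : NNReal}
    (hL : LipschitzWith L G) (hanti : AntitoneOn G (Set.Icc 0 R))
    (hG0 : Real.exp (G 0) = b ^ 2)
    (hd : ∀ᵐ r, r ∈ Set.Ioo 0 R → -radMass G r ≤ r * deriv G r) :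
    4 * b ^ 2 * R ^ 2 / (8 + b ^ 2 * R ^ 2) ≤ radMass G R := by
  have hG := hL.continuous
  have hb2 : 0 ≤ b ^ 2 * R ^ 2 := by positivity
  by_cases h4 : 4 ≤ radMass G R
  · refine le_trans ?_ h4
    rw [div_le_iff₀ (by linarith)]
    linarith
  push Not at h4
  have hcm : Continuous (radMass G) :=
    continuous_iff_continuousAt.2 fun r => (hasDerivAt_radMass hG r).continuousAt
  have hmono : MonotoneOn (radMass G) (Set.Icc 0 R) := by
    apply monotoneOn_of_deriv_nonneg (convex_Icc 0 R) hcm.continuousOn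
    · exact fun r _ => (hasDerivAt_radMass hG r).differentiableAt.differentiableWithinAt
    · intro r hr
      rw [interior_Icc] at hr
      rw [(hasDerivAt_radMass hG r).deriv]
      exact mul_nonneg hr.1.le (Real.exp_pos _).le
  have hlt : ∀ r ∈ Set.Icc 0 R, radMass G r < 4 := fun r hr =>
    (hmono hr ⟨hR.le, le_rfl⟩ hr.2).trans_lt h4
  have hlow : ∀ r ∈ Set.Icc 0 R, r ^ 2 * Real.exp (G r) / 2 ≤ radMass G r := by
    intro r hr
    have h1 : ∫ s in (0 : ℝ)..r, s * Real.exp (G r) = r ^ 2 * Real.exp (G r) / 2 := by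
      rw [intervalIntegral.integral_mul_const, integral_id]
      ring
    rw [← h1]
    apply intervalIntegral.integral_mono_on hr.1
    · exact Continuous.intervalIntegrable (by fun_prop) _ _
    · exact Continuous.intervalIntegrable (by fun_prop) _ _
    · intro s hs
      exact mul_le_mul_of_nonneg_left
        (Real.exp_le_exp.2 (hanti ⟨hs.1, hs.2.trans hr.2⟩ hr hs.2)) hs.1
  have hq' : ∀ r ∈ Set.Ioc 0 R, HasDerivAt (fun r => radMass G r / ((4 - radMass G r) * r ^ 2))
      ((r * Real.exp (G r) * ((4 - radMass G r) * r ^ 2) - radMass G r *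
        (-(r * Real.exp (G r)) * r ^ 2 + (4 - radMass G r) * (2 * r))) /
        ((4 - radMass G r) * r ^ 2) ^ 2) r := by
    intro r hr
    have hm' := hasDerivAt_radMass hG r
    have h4' : 0 < 4 - radMass G r := by linarith [hlt r ⟨hr.1.le, hr.2⟩]
    have hr0 := hr.1
    have := hm'.fun_div ((hm'.const_sub 4).fun_mul (hasDerivAt_pow 2 r)) (by positivity)
    simpa using this
  have hq : MonotoneOn (fun r => radMass G r / ((4 - radMass G r) * r ^ 2)) (Set.Ioc 0 R) := by
    apply monotoneOn_of_deriv_nonneg (convex_Ioc 0 R)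
    · exact fun r hr => (hq' r hr).continuousAt.continuousWithinAt
    · intro r hr
      exact (hq' r (interior_subset hr)).differentiableAt.differentiableWithinAt
    · intro r hr
      have hr := interior_subset hr
      rw [(hq' r hr).deriv]
      apply div_nonneg _ (sq_nonneg _)
      have := sq_mul_exp_ge hG hL hd ⟨hr.1.le, hr.2⟩
      have h2 := mul_nonneg hr.1.le (sub_nonneg.2 this)
      linarith
  have hqR : ∀ r ∈ Set.Ioc 0 R,
      Real.exp (G r) / 8 ≤ radMass G R / ((4 - radMass G R) * R ^ 2) := by
    intro r hr
    refine le_trans ?_ (hq hr ⟨hR, le_rfl⟩ hr.2)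
    have h4' : 0 < 4 - radMass G r := by linarith [hlt r ⟨hr.1.le, hr.2⟩]
    have hr0 := hr.1
    have hl := hlow r ⟨hr.1.le, hr.2⟩
    have hm0 : 0 ≤ radMass G r := le_trans (by positivity) hl
    change _ ≤ radMass G r / ((4 - radMass G r) * r ^ 2)
    rw [le_div_iff₀ (by positivity)]
    have : 0 ≤ Real.exp (G r) * r ^ 2 * radMass G r := by positivity
    linarith
  have hlim : Real.exp (G 0) / 8 ≤ radMass G R / ((4 - radMass G R) * R ^ 2) := by
    have ht : Filter.Tendsto (fun r => Real.exp (G r) / 8) (nhdsWithin 0 (Set.Ioi 0))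
        (nhds (Real.exp (G 0) / 8)) :=
      ((by fun_prop : Continuous fun r => Real.exp (G r) / 8).tendsto 0).mono_left
        nhdsWithin_le_nhds
    exact le_of_tendsto ht (Filter.mem_of_superset (Ioc_mem_nhdsGT hR) hqR)
  rw [hG0, le_div_iff₀ (mul_pos (by linarith) (by positivity))] at hlim
  rw [div_le_iff₀ (by linarith)]
  linarith

lemma integral_bubble {R b : ℝ} (hR : 0 < R) (hb : 0 < b) :
    (∫ y in Metric.ball (0 : EuclideanSpace ℝ (Fin 2)) R, Real.exp (Ufun b y)) =
      2 * π * (4 * b ^ 2 * R ^ 2 / (8 + b ^ 2 * R ^ 2)) := by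
  have hpos : ∀ s : ℝ, 0 < 8 + b ^ 2 * s ^ 2 := fun s => by positivity
  have h1 := integral_ball_radial
    (fun s => Real.exp (-2 * Real.log (1 + b ^ 2 * s ^ 2 / 8) + 2 * Real.log b)) hR.le
  refine h1.trans ?_
  congr 1
  have h2 : ∀ s : ℝ, s * Real.exp (-2 * Real.log (1 + b ^ 2 * s ^ 2 / 8) + 2 * Real.log b) =
      64 * b ^ 2 * s / (8 + b ^ 2 * s ^ 2) ^ 2 := by
    intro s
    have hp : 0 < 1 + b ^ 2 * s ^ 2 / 8 := by positivity
    have he : -2 * Real.log (1 + b ^ 2 * s ^ 2 / 8) + 2 * Real.log b =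
        Real.log (b ^ 2 / (1 + b ^ 2 * s ^ 2 / 8) ^ 2) := by
      rw [Real.log_div (by positivity) (by positivity), Real.log_pow, Real.log_pow]
      push_cast
      ring
    rw [he, Real.exp_log (by positivity)]
    have := hpos s
    field_simp
    ring
  simp_rw [h2]
  have hder : ∀ s ∈ Set.uIcc 0 R, HasDerivAt
      (fun s : ℝ => 4 * b ^ 2 * s ^ 2 / (8 + b ^ 2 * s ^ 2))
      (64 * b ^ 2 * s / (8 + b ^ 2 * s ^ 2) ^ 2) s := by
    intro s _
    have := ((hasDerivAt_pow 2 s).const_mul (4 * b ^ 2)).fun_div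
      (((hasDerivAt_pow 2 s).const_mul (b ^ 2)).const_add 8) (hpos s).ne'
    refine this.congr_deriv ?_
    push_cast
    ring
  rw [intervalIntegral.integral_eq_sub_of_hasDerivAt hder]
  · simp
  · apply Continuous.intervalIntegrable
    exact Continuous.div (by fun_prop) (by fun_prop) fun s => ne_of_gt (pow_pos (hpos s) 2)

/-- Let `R > 0`, `b > 0`, and let `g : [0,R] → ℝ` be Lipschitz, strictly
decreasing, with `g 0 = 2 log b = U_b(0)`.  Set `ψ(y) = g(|y|)` and assume that for a.e.
`r ∈ (0,R)`, `2πr·|g'(r)| ≤ ∫_{B_r} e^ψ dy`.  Then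
`∫_{B_R} e^ψ dy ≥ ∫_{B_R} e^(U_b) dy`. -/
theorem radial_comparison_principle (R b : ℝ) (hR : 0 < R) (hb : 0 < b) (g : ℝ → ℝ)
    (hLip : ∃ L : NNReal, LipschitzOnWith L g (Set.Icc 0 R))
    (hanti : StrictAntiOn g (Set.Icc 0 R))
    (hg0 : g 0 = 2 * Real.log b)
    (hsuper : ∀ᵐ r ∂(volume.restrict (Set.Ioo 0 R)),
      2 * π * r * |deriv g r| ≤
        ∫ y in Metric.ball (0 : EuclideanSpace ℝ (Fin 2)) r, Real.exp (g ‖y‖)) :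
    (∫ y in Metric.ball (0 : EuclideanSpace ℝ (Fin 2)) R, Real.exp (g ‖y‖)) ≥
      ∫ y in Metric.ball (0 : EuclideanSpace ℝ (Fin 2)) R, Real.exp (Ufun b y) := by
  obtain ⟨L, hL⟩ := hLip
  -- Only `g` on `[0,R]` matters, so it may be replaced by a Lipschitz function on all of `ℝ`.
  obtain ⟨G, hGL, hGeq⟩ := hL.extend_real
  have hmass : ∀ r ∈ Set.Icc 0 R,
      (∫ y in Metric.ball (0 : EuclideanSpace ℝ (Fin 2)) r, Real.exp (g ‖y‖)) =
        2 * π * radMass G r := by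
    intro r hr
    rw [integral_ball_radial (fun s => Real.exp (g s)) hr.1, radMass]
    congr 1
    apply intervalIntegral.integral_congr
    intro s hs
    rw [Set.uIcc_of_le hr.1] at hs
    simp only [hGeq ⟨hs.1, hs.2.trans hr.2⟩]
  rw [hmass R ⟨hR.le, le_rfl⟩, integral_bubble hR hb]
  refine mul_le_mul_of_nonneg_left (mass_ge hR hGL ?_ ?_ ?_) (by positivity)
  · exact hanti.antitoneOn.congr hGeq
  · rw [← hGeq ⟨le_rfl, hR.le⟩, hg0, two_mul, Real.exp_add, Real.exp_log hb, sq]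
  · rw [ae_restrict_iff' measurableSet_Ioo] at hsuper
    filter_upwards [hsuper] with r hr hmem
    have h1 := hr hmem
    rw [hmass r ⟨hmem.1.le, hmem.2.le⟩] at h1
    have hev : g =ᶠ[nhds r] G :=
      Filter.mem_of_superset (Icc_mem_nhds hmem.1 hmem.2) hGeq
    rw [hev.deriv_eq, mul_assoc] at h1
    have h2 := le_of_mul_le_mul_left h1 (by positivity)
    have h3 := mul_le_mul_of_nonneg_left (neg_abs_le (deriv G r)) hmem.1.le
    linarith
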